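/- Continuous-time limit of the normalized single-token absorbing reverse probability. Fix σ ∈ (0,1) and suppose the noise-schedule assumption holds at σ. Fix x ∈ X̄ compatible with D, a coordinate h with x^h = m, and a clean token a ∈ Fin K. Then, with t = t_σ(T), one has lim_{T→∞} q̄^h_{t−1|t}(a | x) / β^{(T)}_t = q̄_σ(x^{h→a}) / q̄_σ(x). -/

import Mathlib

open scoped Classical
open Filter

/-- Absorbing-corrupted marginal `q̄_σ(x)`, mask = `none : Option (Fin K)`. -/
noncomputable def qAbs (K H : ℕ) (p : (Fin H → Fin K) → ℝ) (σ : ℝ)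
    (x : Fin H → Option (Fin K)) : ℝ :=
  ∑ x0 : Fin H → Fin K, p x0 *
    ∏ i : Fin H, ((1 - σ) * (if x i = some (x0 i) then (1 : ℝ) else 0)
      + σ * (if x i = none then (1 : ℝ) else 0))

/-- `x ∈ X̄` is compatible with `D = supp p`. -/
def CompatAbs (K H : ℕ) (p : (Fin H → Fin K) → ℝ)
    (x : Fin H → Option (Fin K)) : Prop :=
  ∃ x0 : Fin H → Fin K, p x0 ≠ 0 ∧ ∀ i : Fin H, x i ≠ none → x i = some (x0 i)

/-- Cumulative noise level `σ^{(T)}_t = 1 − ∏_{s=1}^t (1 − β^{(T)}_s)`. -/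
noncomputable def cumNoise (β : ℕ → ℕ → ℝ) (T t : ℕ) : ℝ :=
  1 - ∏ s ∈ Finset.Icc 1 t, (1 - β T s)

/-- One-step absorbing forward kernel `q̄_{t|t−1}(y'|y)` with per-step rate `b`. -/
noncomputable def stepAbs (K H : ℕ) (b : ℝ) (y' y : Fin H → Option (Fin K)) : ℝ :=
  ∏ i : Fin H, ((1 - b) * (if y' i = y i then (1 : ℝ) else 0)
    + b * (if y' i = none then (1 : ℝ) else 0))

/-- Exact single-token absorbing reverse probability
`q̄^h_{t−1|t}(a|x) = Σ_{y : y^h = a} q̄_{t−1}(y) q̄_{t|t−1}(x|y) / q̄_t(x)`. -/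
noncomputable def revAbs (K H : ℕ) (p : (Fin H → Fin K) → ℝ) (β : ℕ → ℕ → ℝ)
    (T t : ℕ) (h : Fin H) (a : Fin K) (x : Fin H → Option (Fin K)) : ℝ :=
  (∑ y ∈ Finset.univ.filter (fun y : Fin H → Option (Fin K) => y h = some a),
      qAbs K H p (cumNoise β T (t - 1)) y * stepAbs K H (β T t) x y)
    / qAbs K H p (cumNoise β T t) x

/-!
The one-step kernels form a semigroup, so pushing `q̄_{t-1}` one step forward gives `q̄_t`. For `x`
masked at `h`, a state `y` with `y h = a` reaches `x` by being masked at `h` (factor `β_t`) and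
reaches `x^{h→a}` by surviving there (factor `1 - β_t`), with identical factors elsewhere, while
states with `y h ≠ a` never reach `x^{h→a}`. Hence, already at finite `T`,
`q̄^h_{t-1|t}(a|x) = β_t / (1 - β_t) * (q̄_t(x^{h→a}) / q̄_t(x))`,
and the limit follows from continuity of the marginal in the noise level.
-/

/-- The transition kernel of a single coordinate: `tokenKernel b v u` is the probability that the
token `u` becomes `v` when it is masked with probability `b`. As in `stepAbs`, the target comes
first and the mask is `none`. -/
noncomputable def tokenKernel {α : Type*} [DecidableEq α] (b : ℝ) (v u : Option α) : ℝ :=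
  (1 - b) * (if v = u then 1 else 0) + b * (if v = none then 1 else 0)

section tokenKernel

variable {α : Type*} [DecidableEq α] {b : ℝ}

theorem tokenKernel_none_some (a : α) : tokenKernel b none (some a) = b := by
  simp [tokenKernel]

theorem tokenKernel_some_self (a : α) : tokenKernel b (some a) (some a) = 1 - b := by
  simp [tokenKernel]

theorem tokenKernel_some_of_ne {a : α} {u : Option α} (hu : u ≠ some a) :
    tokenKernel b (some a) u = 0 := by
  simp [tokenKernel, hu.symm]

theorem tokenKernel_nonneg (hb : b ∈ Set.Icc (0 : ℝ) 1) (v u : Option α) :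
    0 ≤ tokenKernel b v u := by
  have hb0 := hb.1
  have hb1 := sub_nonneg.2 hb.2
  unfold tokenKernel
  positivity

theorem tokenKernel_some_pos (hb : b ∈ Set.Ioo (0 : ℝ) 1) {v : Option α} {a : α}
    (hva : v ≠ none → v = some a) : 0 < tokenKernel b v (some a) := by
  rcases eq_or_ne v none with rfl | hv
  · simpa only [tokenKernel_none_some] using hb.1
  · simpa only [hva hv, tokenKernel_some_self, sub_pos] using hb.2

theorem sum_tokenKernel [Fintype α] (b : ℝ) (u : Option α) : ∑ v, tokenKernel b v u = 1 := by
  simp [tokenKernel, Finset.sum_add_distrib]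

theorem sum_tokenKernel_mul_tokenKernel [Fintype α] (b c : ℝ) (v w : Option α) :
    ∑ u, tokenKernel b v u * tokenKernel c u w = tokenKernel (1 - (1 - b) * (1 - c)) v w := by
  calc ∑ u, tokenKernel b v u * tokenKernel c u w
      = (1 - b) * (∑ u, if v = u then tokenKernel c u w else 0)
          + b * (if v = none then 1 else 0) * ∑ u, tokenKernel c u w := by
        rw [Finset.mul_sum, Finset.mul_sum, ← Finset.sum_add_distrib]
        refine Finset.sum_congr rfl fun u _ => ?_
        rw [tokenKernel, add_mul, mul_assoc (1 - b), ite_mul, one_mul, zero_mul]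
    _ = (1 - b) * tokenKernel c v w + b * (if v = none then 1 else 0) := by
        rw [Fintype.sum_ite_eq, sum_tokenKernel, mul_one]
    _ = tokenKernel (1 - (1 - b) * (1 - c)) v w := by
        unfold tokenKernel
        ring

end tokenKernel

section marginal

variable {K H : ℕ}

theorem stepAbs_eq_prod (b : ℝ) (x y : Fin H → Option (Fin K)) :
    stepAbs K H b x y = ∏ i, tokenKernel b (x i) (y i) := rfl

theorem qAbs_eq_sum_stepAbs (p : (Fin H → Fin K) → ℝ) (σ : ℝ) (x : Fin H → Option (Fin K)) :
    qAbs K H p σ x = ∑ x0, p x0 * stepAbs K H σ x (some ∘ x0) := rfl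

theorem sum_stepAbs_mul_stepAbs (b c : ℝ) (x z : Fin H → Option (Fin K)) :
    ∑ y, stepAbs K H b x y * stepAbs K H c y z = stepAbs K H (1 - (1 - b) * (1 - c)) x z := by
  simp only [stepAbs_eq_prod, ← Finset.prod_mul_distrib, ← sum_tokenKernel_mul_tokenKernel,
    Fintype.prod_sum]

theorem sum_qAbs_mul_stepAbs (p : (Fin H → Fin K) → ℝ) (σ b : ℝ) (x : Fin H → Option (Fin K)) :
    ∑ y, qAbs K H p σ y * stepAbs K H b x y = qAbs K H p (1 - (1 - b) * (1 - σ)) x := by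
  simp only [qAbs_eq_sum_stepAbs, ← sum_stepAbs_mul_stepAbs, Finset.sum_mul, Finset.mul_sum]
  rw [Finset.sum_comm]
  exact Finset.sum_congr rfl fun _ _ => Finset.sum_congr rfl fun _ _ => by ring

theorem continuous_qAbs (p : (Fin H → Fin K) → ℝ) (x : Fin H → Option (Fin K)) :
    Continuous fun σ => qAbs K H p σ x := by
  unfold qAbs
  fun_prop

theorem qAbs_pos {p : (Fin H → Fin K) → ℝ} (hp : ∀ v, 0 ≤ p v) {σ : ℝ}
    (hσ : σ ∈ Set.Ioo (0 : ℝ) 1) {x : Fin H → Option (Fin K)} (hx : CompatAbs K H p x) :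
    0 < qAbs K H p σ x := by
  obtain ⟨x0, hx0, hagree⟩ := hx
  refine Finset.sum_pos' (fun v _ => mul_nonneg (hp v) ?_) ⟨x0, Finset.mem_univ _, ?_⟩
  · exact Finset.prod_nonneg fun i _ => tokenKernel_nonneg (Set.Ioo_subset_Icc_self hσ) _ _
  · exact mul_pos ((hp x0).lt_of_ne' hx0)
      (Finset.prod_pos fun i _ => tokenKernel_some_pos hσ (hagree i))

end marginal

section reverse

variable {K H : ℕ} {x y : Fin H → Option (Fin K)} {h : Fin H} {a : Fin K}

theorem one_sub_mul_stepAbs_eq_mul_stepAbs_update (b : ℝ) (hx : x h = none) (hy : y h = some a) :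
    (1 - b) * stepAbs K H b x y = b * stepAbs K H b (Function.update x h (some a)) y := by
  have hrest : ∏ i ∈ Finset.univ.erase h,
        tokenKernel b (Function.update x h (some a) i) (y i)
      = ∏ i ∈ Finset.univ.erase h, tokenKernel b (x i) (y i) :=
    Finset.prod_congr rfl fun i hi => by rw [Function.update_of_ne (Finset.ne_of_mem_erase hi)]
  simp only [stepAbs_eq_prod, ← Finset.mul_prod_erase Finset.univ _ (Finset.mem_univ h), hrest,
    Function.update_self, hx, hy, tokenKernel_none_some, tokenKernel_some_self]
  ring

theorem stepAbs_update_some_eq_zero (b : ℝ) (hy : y h ≠ some a) :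
    stepAbs K H b (Function.update x h (some a)) y = 0 :=
  Finset.prod_eq_zero (Finset.mem_univ h) <| by
    rw [Function.update_self]
    exact tokenKernel_some_of_ne hy

theorem one_sub_mul_sum_filter_qAbs_mul_stepAbs (p : (Fin H → Fin K) → ℝ) (σ b : ℝ)
    (hx : x h = none) :
    (1 - b) * ∑ y with y h = some a, qAbs K H p σ y * stepAbs K H b x y
      = b * qAbs K H p (1 - (1 - b) * (1 - σ)) (Function.update x h (some a)) := by
  set x' := Function.update x h (some a)
  calc (1 - b) * ∑ y with y h = some a, qAbs K H p σ y * stepAbs K H b x y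
      = ∑ y with y h = some a, b * (qAbs K H p σ y * stepAbs K H b x' y) := by
        rw [Finset.mul_sum]
        refine Finset.sum_congr rfl fun y hy => ?_
        rw [mul_left_comm, one_sub_mul_stepAbs_eq_mul_stepAbs_update b hx (by simpa using hy),
          mul_left_comm]
    _ = ∑ y, b * (qAbs K H p σ y * stepAbs K H b x' y) := by
        refine Finset.sum_filter_of_ne fun y _ hne => ?_
        contrapose! hne
        rw [stepAbs_update_some_eq_zero b hne, mul_zero, mul_zero]
    _ = b * qAbs K H p (1 - (1 - b) * (1 - σ)) x' := by
        rw [← Finset.mul_sum, sum_qAbs_mul_stepAbs]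

theorem cumNoise_eq_of_one_le (β : ℕ → ℕ → ℝ) (T : ℕ) {t : ℕ} (ht : 1 ≤ t) :
    cumNoise β T t = 1 - (1 - β T t) * (1 - cumNoise β T (t - 1)) := by
  obtain ⟨s, rfl⟩ := Nat.exists_eq_add_of_le' ht
  simp only [cumNoise, Finset.prod_Icc_succ_top ht, Nat.add_sub_cancel, sub_sub_cancel, mul_comm]

theorem revAbs_eq_mul_div (p : (Fin H → Fin K) → ℝ) (β : ℕ → ℕ → ℝ) {T t : ℕ} (ht : 1 ≤ t)
    (hβ : β T t ≠ 1) (hx : x h = none) :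
    revAbs K H p β T t h a x = β T t / (1 - β T t) *
      (qAbs K H p (cumNoise β T t) (Function.update x h (some a))
        / qAbs K H p (cumNoise β T t) x) := by
  have hβ' : 1 - β T t ≠ 0 := sub_ne_zero.2 hβ.symm
  have hnum := one_sub_mul_sum_filter_qAbs_mul_stepAbs (a := a) p (cumNoise β T (t - 1)) (β T t) hx
  rw [← cumNoise_eq_of_one_le β T ht] at hnum
  rw [revAbs, eq_div_of_mul_eq hβ' ((mul_comm _ _).trans hnum)]
  ring

end reverse

theorem absorbing_reverse_normalized_limit_general {K H : ℕ} (p : (Fin H → Fin K) → ℝ)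
    (β : ℕ → ℕ → ℝ) {σ : ℝ} {t : ℕ → ℕ} {l : Filter ℕ} (ht : ∀ᶠ T in l, 1 ≤ t T)
    (hβ_ne : ∀ᶠ T in l, β T (t T) ≠ 0)
    (hσ : Tendsto (fun T => cumNoise β T (t T)) l (nhds σ))
    (hβ : Tendsto (fun T => β T (t T)) l (nhds 0))
    {x : Fin H → Option (Fin K)} (hx : qAbs K H p σ x ≠ 0)
    {h : Fin H} (hm : x h = none) (a : Fin K) :
    Tendsto (fun T => revAbs K H p β T (t T) h a x / β T (t T)) l
      (nhds (qAbs K H p σ (Function.update x h (some a)) / qAbs K H p σ x)) := by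
  have hmarginal (z) : Tendsto (fun T => qAbs K H p (cumNoise β T (t T)) z) l
      (nhds (qAbs K H p σ z)) := ((continuous_qAbs p z).tendsto σ).comp hσ
  have hratio : Tendsto (fun T => (1 - β T (t T))⁻¹ *
      (qAbs K H p (cumNoise β T (t T)) (Function.update x h (some a))
        / qAbs K H p (cumNoise β T (t T)) x)) l
      (nhds (qAbs K H p σ (Function.update x h (some a)) / qAbs K H p σ x)) := by
    simpa using ((hβ.const_sub 1).inv₀ (by norm_num)).mul ((hmarginal _).div (hmarginal x) hx)
  refine hratio.congr' ?_
  filter_upwards [ht, hβ_ne, hβ.eventually_ne zero_ne_one] with T hT hβ0 hβ1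
  rw [revAbs_eq_mul_div p β hT hβ1 hm]
  field_simp

/-- Continuous-time limit of the normalized single-token absorbing reverse probability:
with `x` compatible with `D`, `x^h = m`, a clean token `a`, and `t = t_σ(T)`,
`q̄^h_{t−1|t}(a|x)/β^{(T)}_t → q̄_σ(x^{h→a})/q̄_σ(x)` as `T → ∞`. -/
theorem absorbing_reverse_normalized_limit
    (K H : ℕ) (hK : 2 ≤ K) (hH : 1 ≤ H)
    (p : (Fin H → Fin K) → ℝ) (hp0 : ∀ v, 0 ≤ p v) (hp1 : ∑ v, p v = 1)
    (β : ℕ → ℕ → ℝ) (hβ : ∀ T, ∀ t ∈ Finset.Icc 1 T, β T t ∈ Set.Ioo (0 : ℝ) 1)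
    (σ : ℝ) (hσ : σ ∈ Set.Ioo (0 : ℝ) 1)
    (tsel : ℕ → ℕ)
    (htsel : ∀ T, 1 ≤ T → tsel T ∈ Finset.Icc 1 T ∧
      ∀ s ∈ Finset.Icc 1 T, |cumNoise β T (tsel T) - σ| ≤ |cumNoise β T s - σ|)
    (hsched1 : Tendsto (fun T => cumNoise β T (tsel T)) atTop (nhds σ))
    (hsched2 : Tendsto (fun T => β T (tsel T)) atTop (nhds 0))
    (x : Fin H → Option (Fin K)) (hx : CompatAbs K H p x)
    (h : Fin H) (hm : x h = none) (a : Fin K) :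
    Tendsto (fun T => revAbs K H p β T (tsel T) h a x / β T (tsel T)) atTop
      (nhds (qAbs K H p σ (Function.update x h (some a)) / qAbs K H p σ x)) := by
  have hmem : ∀ᶠ T in atTop, tsel T ∈ Finset.Icc 1 T :=
    (eventually_ge_atTop 1).mono fun T hT => (htsel T hT).1
  exact absorbing_reverse_normalized_limit_general p β
    (hmem.mono fun _ ht => (Finset.mem_Icc.1 ht).1) (hmem.mono fun T ht => (hβ T _ ht).1.ne')
    hsched1 hsched2 (qAbs_pos hp0 hσ hx).ne' hm a
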